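/- For all sufficiently large real x, 2x log x + O(x) ≤ ∑_{p ≤ 4x² + 1} (log p) · #{ n ∈ ℤ : x ≤ n ≤ 2x and n² + 1 ≡ 0 (mod p) }; that is, there is a constant K such that ∑_{p ≤ 4x²+1} (log p) · #{x ≤ n ≤ 2x : p ∣ n² + 1} ≥ 2x log x − K x. -/

import Mathlib

open ArithmeticFunction in
lemma aux_nonprime_summable :
    Summable fun n : ℕ ↦ (if n.Prime then 0 else vonMangoldt n) / (n : ℝ) := by
  have h := ArithmeticFunction.vonMangoldt.summable_residueClass_non_primes_div (q := 1) (1 : ZMod 1)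
  refine h.congr fun n => ?_
  have : (n : ZMod 1) = 1 := Subsingleton.elim _ _
  simp [ArithmeticFunction.vonMangoldt.residueClass, Set.indicator, this]

lemma aux_class_count (a b v : ℤ) (d : ℕ) (hd : 0 < d) (hab : a ≤ b + 1) :
    (((Finset.Icc a b).filter (fun n => n ≡ v [ZMOD (d : ℤ)])).card : ℝ)
      ≤ ((b : ℝ) - a + 1) / d + 1 := by
  have hIcc : Finset.Icc a b = Finset.Ioc (a - 1) b := by
    ext n; simp only [Finset.mem_Icc, Finset.mem_Ioc]; omega
  have h := Int.Ioc_filter_modEq_card (a - 1) b (r := (d : ℤ)) (by exact_mod_cast hd) v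
  rw [hIcc]
  have hd' : (0 : ℚ) < d := by exact_mod_cast hd
  have hab' : (a : ℚ) ≤ b + 1 := by exact_mod_cast hab
  have key : ((((Finset.Ioc (a - 1) b).filter (fun n => n ≡ v [ZMOD (d : ℤ)])).card : ℤ) : ℚ)
      ≤ ((b : ℚ) - a + 1) / d + 1 := by
    rw [h, Int.cast_max]
    apply max_le
    · have h1 := Int.floor_le (((b : ℚ) - v) / ((d : ℤ) : ℚ))
      have h2 := Int.lt_floor_add_one ((((a - 1 : ℤ) : ℚ) - v) / ((d : ℤ) : ℚ))
      have h3 : ((b : ℚ) - a + 1) / d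
          = ((b : ℚ) - v) / ((d : ℤ) : ℚ) - (((a - 1 : ℤ) : ℚ) - v) / ((d : ℤ) : ℚ) := by
        push_cast; ring
      push_cast at *
      linarith
    · have : 0 ≤ ((b : ℚ) - a + 1) / d := div_nonneg (by linarith) hd'.le
      push_cast; linarith
  have := (Rat.cast_le (K := ℝ)).2 key
  push_cast at this
  exact this

lemma aux_roots (d : ℕ) (hd : IsPrimePow d) (hnp : ¬ d.Prime) (m n : ℤ)
    (hm : (d : ℤ) ∣ m ^ 2 + 1) (hn : (d : ℤ) ∣ n ^ 2 + 1) :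
    n ≡ m [ZMOD (d : ℤ)] ∨ n ≡ -m [ZMOD (d : ℤ)] := by
  obtain ⟨p, k, hp, hk, rfl⟩ := (isPrimePow_nat_iff d).1 hd
  have hk2 : 2 ≤ k := by
    by_contra hlt
    have : k = 1 := by omega
    subst this
    simp [hp] at hnp
  have hpI : Prime (p : ℤ) := Nat.prime_iff_prime_int.1 hp
  have hpd : (p : ℤ) ∣ ((p ^ k : ℕ) : ℤ) := by
    push_cast; exact dvd_pow_self _ hk.ne'
  have hp2 : p ≠ 2 := by
    rintro rfl
    have h4 : (4 : ℤ) ∣ ((2 ^ k : ℕ) : ℤ) := by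
      push_cast
      exact pow_dvd_pow (2 : ℤ) hk2
    have h5 := h4.trans hm
    rcases Int.even_or_odd' m with ⟨c, rfl | rfl⟩
    · ring_nf at h5; omega
    · ring_nf at h5; omega
  have hprod : ((p ^ k : ℕ) : ℤ) ∣ (n - m) * (n + m) := by
    have h := dvd_sub hn hm
    have e : n ^ 2 + 1 - (m ^ 2 + 1) = (n - m) * (n + m) := by ring
    rwa [e] at h
  have hnot : ¬ ((p : ℤ) ∣ n - m ∧ (p : ℤ) ∣ n + m) := by
    rintro ⟨h1, h2⟩
    have h3 : (p : ℤ) ∣ 2 * m := by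
      have h := dvd_sub h2 h1
      have e : n + m - (n - m) = 2 * m := by ring
      rwa [e] at h
    rcases hpI.dvd_or_dvd h3 with h | h
    · have : p ∣ 2 := by exact_mod_cast h
      exact hp2 ((Nat.prime_dvd_prime_iff_eq hp Nat.prime_two).1 this)
    · have h6 : (p : ℤ) ∣ 1 := by
        have := dvd_sub (hpd.trans hm) (h.trans (dvd_pow_self m two_ne_zero))
        simpa using this
      exact hpI.not_isUnit (isUnit_of_dvd_one h6)
  push_cast at hprod ⊢
  by_cases h1 : (p : ℤ) ∣ n - m
  · left
    have h2 : ¬ (p : ℤ) ∣ n + m := fun h => hnot ⟨h1, h⟩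
    have hc : IsCoprime ((p : ℤ) ^ k) (n + m) := ((Prime.coprime_iff_not_dvd hpI).2 h2).pow_left
    exact (Int.modEq_iff_dvd.2 (hc.dvd_of_dvd_mul_right hprod)).symm
  · right
    have hc : IsCoprime ((p : ℤ) ^ k) (n - m) := ((Prime.coprime_iff_not_dvd hpI).2 h1).pow_left
    have := hc.dvd_of_dvd_mul_left hprod
    refine (Int.modEq_iff_dvd.2 ?_).symm
    simpa using this

lemma aux_count (a b : ℤ) (d : ℕ) (hd : IsPrimePow d) (hnp : ¬ d.Prime) (hab : a ≤ b + 1) :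
    (((Finset.Icc a b).filter (fun n => (d : ℤ) ∣ n ^ 2 + 1)).card : ℝ)
      ≤ 2 * (((b : ℝ) - a + 1) / d + 1) := by
  have hab' : (a : ℝ) ≤ b + 1 := by exact_mod_cast hab
  rcases ((Finset.Icc a b).filter (fun n => (d : ℤ) ∣ n ^ 2 + 1)).eq_empty_or_nonempty with h | ⟨m, hm⟩
  · rw [h]
    have : 0 ≤ ((b : ℝ) - a + 1) / d := div_nonneg (by linarith) (by positivity)
    simp; linarith
  · have hm' := (Finset.mem_filter.1 hm).2
    have hsub : (Finset.Icc a b).filter (fun n => (d : ℤ) ∣ n ^ 2 + 1) ⊆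
        (Finset.Icc a b).filter (fun n => n ≡ m [ZMOD (d : ℤ)]) ∪
        (Finset.Icc a b).filter (fun n => n ≡ -m [ZMOD (d : ℤ)]) := by
      intro n hn
      rw [Finset.mem_filter] at hn
      rw [Finset.mem_union, Finset.mem_filter, Finset.mem_filter]
      rcases aux_roots d hd hnp m n hm' hn.2 with h | h
      · exact Or.inl ⟨hn.1, h⟩
      · exact Or.inr ⟨hn.1, h⟩
    have h1 := (Finset.card_le_card hsub).trans (Finset.card_union_le _ _)
    have h1' := (Nat.cast_le (α := ℝ)).2 h1
    push_cast at h1'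
    have h2 := aux_class_count a b m d hd.pos hab
    have h3 := aux_class_count a b (-m) d hd.pos hab
    linarith

open ArithmeticFunction in
lemma aux_log (n : ℤ) (N : ℕ) (hN : n ^ 2 + 1 ≤ N) :
    Real.log ((n : ℝ) ^ 2 + 1)
      = ∑ d ∈ Finset.Ioc 0 N, if (d : ℤ) ∣ n ^ 2 + 1 then vonMangoldt d else 0 := by
  have hpos : 0 < n ^ 2 + 1 := by positivity
  obtain ⟨m, hm⟩ := Int.eq_ofNat_of_zero_le hpos.le
  have hmr : ((n : ℝ) ^ 2 + 1) = (m : ℝ) := by exact_mod_cast hm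
  rw [hmr, ← vonMangoldt_sum, ← Finset.sum_filter]
  refine Finset.sum_congr ?_ fun _ _ => rfl
  ext d
  rw [hm] at hN hpos ⊢
  simp only [Nat.mem_divisors, Finset.mem_filter, Finset.mem_Ioc, Int.natCast_dvd_natCast]
  have hN' : m ≤ N := by exact_mod_cast hN
  have hpos' : 0 < m := by exact_mod_cast hpos
  constructor
  · rintro ⟨h, h0⟩
    exact ⟨⟨Nat.pos_of_dvd_of_pos h hpos', (Nat.le_of_dvd hpos' h).trans hN'⟩, h⟩
  · rintro ⟨_, h⟩
    exact ⟨h, hpos'.ne'⟩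

/-- For all sufficiently large real `x`,
`2x log x + O(x) ≤ ∑_{p ≤ 4x² + 1} (log p) · #{n ∈ ℤ : x ≤ n ≤ 2x, p ∣ n² + 1}`. -/
theorem weighted_prime_count_lower_bound :
    ∃ K : ℝ, ∃ x₀ : ℝ, ∀ x : ℝ, x₀ ≤ x →
      (∑ p ∈ (Finset.range (⌊4 * x ^ 2 + 1⌋₊ + 1)).filter Nat.Prime,
          Real.log p *
            (((Finset.Icc ⌈x⌉ ⌊2 * x⌋).filter
              (fun n => (p : ℤ) ∣ n ^ 2 + 1)).card : ℝ))
        ≥ 2 * x * Real.log x - K * x := by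
  obtain ⟨C, hC⟩ := Chebyshev.psi_sub_theta_le_mul_sqrt
  set S : ℝ := ∑' n : ℕ, (if n.Prime then 0 else ArithmeticFunction.vonMangoldt n) / (n : ℝ) with hS
  refine ⟨2 + 4 * S + 6 * |C|, 1, fun x hx => ?_⟩
  set N := ⌊4 * x ^ 2 + 1⌋₊ with hN
  set a := ⌈x⌉ with ha
  set b := ⌊2 * x⌋ with hb
  have ha1 : x ≤ a := Int.le_ceil x
  have ha2 : (a : ℝ) < x + 1 := Int.ceil_lt_add_one x
  have hb1 : (b : ℝ) ≤ 2 * x := Int.floor_le _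
  have hb2 : 2 * x < b + 1 := Int.lt_floor_add_one _
  have hab : a ≤ b + 1 := by
    have : (a : ℝ) < b + 2 := by linarith
    have : a < b + 2 := by exact_mod_cast this
    omega
  set c : ℕ → ℝ := fun d => (((Finset.Icc a b).filter (fun n => (d : ℤ) ∣ n ^ 2 + 1)).card : ℝ)
    with hc
  have hlogx : 0 ≤ Real.log x := Real.log_nonneg hx
  -- total
  have htot : ∑ n ∈ Finset.Icc a b, Real.log ((n : ℝ) ^ 2 + 1)
      = ∑ d ∈ Finset.Ioc 0 N, ArithmeticFunction.vonMangoldt d * c d := by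
    have h1 : ∀ n ∈ Finset.Icc a b, Real.log ((n : ℝ) ^ 2 + 1)
      = ∑ d ∈ Finset.Ioc 0 N,
        if (d : ℤ) ∣ n ^ 2 + 1 then ArithmeticFunction.vonMangoldt d else 0 := by
      intro n hn
      rw [Finset.mem_Icc] at hn
      apply aux_log
      have h2 : (n : ℝ) ≤ b := by exact_mod_cast hn.2
      have h3 : (a : ℝ) ≤ n := by exact_mod_cast hn.1
      have h4 : (((n ^ 2 + 1).toNat : ℕ) : ℝ) ≤ 4 * x ^ 2 + 1 := by
        have h5 : (((n ^ 2 + 1).toNat : ℤ) : ℝ) = (n : ℝ) ^ 2 + 1 := by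
          rw [Int.toNat_of_nonneg (by positivity)]; push_cast; ring
        rw [Int.cast_natCast] at h5
        rw [h5]; nlinarith
      have h6 := Nat.le_floor h4
      have h7 := Int.self_le_toNat (n ^ 2 + 1)
      have : ((n ^ 2 + 1).toNat : ℤ) ≤ N := by exact_mod_cast h6
      linarith
    rw [Finset.sum_congr rfl h1, Finset.sum_comm]
    refine Finset.sum_congr rfl fun d _ => ?_
    rw [← Finset.sum_filter, Finset.sum_const, nsmul_eq_mul, mul_comm]
  have hlow : (x - 1) * (2 * Real.log x) ≤ ∑ n ∈ Finset.Icc a b, Real.log ((n : ℝ) ^ 2 + 1) := by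
    have h1 : ∀ n ∈ Finset.Icc a b, 2 * Real.log x ≤ Real.log ((n : ℝ) ^ 2 + 1) := by
      intro n hn
      rw [Finset.mem_Icc] at hn
      have h3 : (a : ℝ) ≤ n := by exact_mod_cast hn.1
      have : 2 * Real.log x = Real.log (x ^ 2) := by rw [Real.log_pow]; norm_num
      rw [this]
      apply Real.log_le_log (by positivity)
      nlinarith
    have h2 := Finset.card_nsmul_le_sum _ _ _ h1
    rw [nsmul_eq_mul, Int.card_Icc] at h2
    refine le_trans ?_ h2
    apply mul_le_mul_of_nonneg_right _ (by positivity)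
    have h5 : (((b + 1 - a).toNat : ℤ) : ℝ) = (b : ℝ) + 1 - a := by
      rw [Int.toNat_of_nonneg (by omega)]; push_cast; ring
    rw [Int.cast_natCast] at h5
    rw [h5]; linarith
  have hsplit := Finset.sum_filter_add_sum_filter_not (Finset.Ioc 0 N) Nat.Prime
    (fun d => ArithmeticFunction.vonMangoldt d * c d)
  have hprime : ∑ d ∈ (Finset.Ioc 0 N).filter Nat.Prime, ArithmeticFunction.vonMangoldt d * c d
      = ∑ p ∈ (Finset.range (N + 1)).filter Nat.Prime, Real.log p * c p := by
    have : (Finset.Ioc 0 N).filter Nat.Prime = (Finset.range (N + 1)).filter Nat.Prime := by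
      ext d
      simp only [Finset.mem_filter, Finset.mem_Ioc, Finset.mem_range]
      constructor
      · rintro ⟨h, hp⟩; exact ⟨by omega, hp⟩
      · rintro ⟨h, hp⟩; exact ⟨⟨hp.pos, by omega⟩, hp⟩
    rw [this]
    refine Finset.sum_congr rfl fun d hd => ?_
    rw [ArithmeticFunction.vonMangoldt_apply_prime (Finset.mem_filter.1 hd).2]
  have hnon : ∑ d ∈ (Finset.Ioc 0 N).filter (fun d => ¬ Nat.Prime d),
      ArithmeticFunction.vonMangoldt d * c d ≤ 4 * S * x + 6 * |C| * x := by
    have h1 : ∀ d ∈ (Finset.Ioc 0 N).filter (fun d => ¬ Nat.Prime d),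
        ArithmeticFunction.vonMangoldt d * c d ≤
        4 * x * ((if d.Prime then 0 else ArithmeticFunction.vonMangoldt d) / (d : ℝ))
          + 2 * ArithmeticFunction.vonMangoldt d := by
      intro d hd
      have hnp := (Finset.mem_filter.1 hd).2
      rw [if_neg hnp]
      by_cases hpp : IsPrimePow d
      · have hd0 : (0 : ℝ) < d := by exact_mod_cast hpp.pos
        have h2 : c d ≤ 2 * (((b : ℝ) - a + 1) / d + 1) := aux_count a b d hpp hnp hab
        have h3 : ((b : ℝ) - a + 1) / d ≤ (2 * x) / d := by
          apply div_le_div_of_nonneg_right _ hd0.le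
          linarith
        have h4 : c d ≤ 4 * x / d + 2 := by
          have : 4 * x / d = 2 * ((2 * x) / d) := by ring
          linarith
        calc _ ≤ ArithmeticFunction.vonMangoldt d * (4 * x / d + 2) :=
              mul_le_mul_of_nonneg_left h4 ArithmeticFunction.vonMangoldt_nonneg
          _ = _ := by ring
      · rw [ArithmeticFunction.vonMangoldt_eq_zero_iff.2 hpp]; simp
    refine (Finset.sum_le_sum h1).trans ?_
    rw [Finset.sum_add_distrib, ← Finset.mul_sum, ← Finset.mul_sum,
      ← Chebyshev.psi_sub_theta_eq_sum_not_prime]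
    have h2 : ∑ d ∈ (Finset.Ioc 0 N).filter (fun d => ¬ Nat.Prime d),
        ((if d.Prime then 0 else ArithmeticFunction.vonMangoldt d) / (d : ℝ)) ≤ S := by
      apply aux_nonprime_summable.sum_le_tsum
      intro d _
      apply div_nonneg _ (by positivity)
      split_ifs
      · exact le_rfl
      · exact ArithmeticFunction.vonMangoldt_nonneg
    have h3 := hC (4 * x ^ 2 + 1)
    have h4 : Real.sqrt (4 * x ^ 2 + 1) ≤ 3 * x := by
      apply Real.sqrt_le_iff.2
      constructor <;> nlinarith
    have h5 : C * Real.sqrt (4 * x ^ 2 + 1) ≤ |C| * (3 * x) :=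
      mul_le_mul (le_abs_self C) h4 (Real.sqrt_nonneg _) (abs_nonneg C)
    have h6 := mul_le_mul_of_nonneg_left h2 (show 0 ≤ 4 * x by linarith)
    linarith
  have hlogle : Real.log x ≤ x := (Real.log_le_sub_one_of_pos (by linarith)).trans (by linarith)
  show _ ≤ ∑ p ∈ (Finset.range (N + 1)).filter Nat.Prime, Real.log p * c p
  rw [← hprime]
  linarith
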